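/- Let S be a finite set of integers containing no two consecutive integers such that Σ_{i∈S} φ^i is an integer. Assume S contains at least one positive element, and let i be the smallest positive element of S. Then Σ_{k∈S, k<0} φ^k − Σ_{k∈S, k>0} φ̄^k equals 1 if i is odd, and equals 0 if i is even. -/

import Mathlib

/-!
Write `A = ∑_{k<0} φ^k`, `B = ∑_{k>0} φ^k` and `A'`, `B'` for the conjugate sums. Since `A + B` is an
integer, its `φ`-coordinate in `ℤ[φ]` vanishes, i.e. `A` and `B` have opposite `φ`-coordinates; as
`φ + φ̄ = 1`, the number `A - B'` is then an integer (`exists_int_sub`).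

It remains to locate `A - B'` in an interval containing a single integer. A sum of non-consecutive
powers of `φ` with exponents at most `m` is below `φ^(m+1)` (`sum_phi_lt`). Hence `0 ≤ A < 1`.
Applied to `|φ̄^k| = φ^(-k)`, it gives `|B'| < φ^(1-i) ≤ 1` and shows that the leading term `φ̄^i`
dominates, so `B'` has the sign of `(-1)^i`. Therefore `A - B'` lies in `(0, 2)` for `i` odd and in
`(-1, 1)` for `i` even.
-/

/-- The golden ratio φ = (1+√5)/2. -/
noncomputable def goldenPhi : ℝ := (1 + Real.sqrt 5) / 2

/-- The algebraic conjugate φ̄ = (1−√5)/2. -/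
noncomputable def goldenPhiBar : ℝ := (1 - Real.sqrt 5) / 2

lemma phi_pos : 0 < goldenPhi := Real.goldenRatio_pos

lemma one_lt_phi : 1 < goldenPhi := Real.one_lt_goldenRatio

lemma phi_add_phiBar : goldenPhi + goldenPhiBar = 1 := Real.goldenRatio_add_goldenConj

lemma phi_sq : goldenPhi ^ 2 = goldenPhi + 1 := Real.goldenRatio_sq

lemma phiBar_eq : goldenPhiBar = -goldenPhi⁻¹ := by
  have h := phi_sq
  have h0 := phi_pos.ne'
  have h1 : goldenPhiBar = 1 - goldenPhi := by linarith [phi_add_phiBar]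
  rw [h1]
  field_simp
  linarith

lemma phiBar_zpow (k : ℤ) : goldenPhiBar ^ k = (-1) ^ k * goldenPhi ^ (-k) := by
  rw [phiBar_eq, neg_eq_neg_one_mul, mul_zpow, inv_zpow']

lemma abs_phiBar_zpow (k : ℤ) : |goldenPhiBar ^ k| = goldenPhi ^ (-k) := by
  rw [phiBar_zpow, abs_mul, abs_zpow, abs_neg, abs_one, one_zpow, one_mul,
    abs_of_pos (zpow_pos phi_pos _)]

lemma phi_zpow_add (a : ℤ) : goldenPhi ^ a + goldenPhi ^ (a - 1) = goldenPhi ^ (a + 1) := by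
  have h0 := phi_pos.ne'
  rw [zpow_sub_one₀ h0, zpow_add_one₀ h0]
  field_simp
  linarith [phi_sq]

/-- Greedy bound: non-consecutive powers of `φ` with exponents at most `m` sum to less than
`φ^(m+1)`. -/
lemma sum_phi_lt (T : Finset ℤ) : (∀ k ∈ T, k + 1 ∉ T) → ∀ m : ℤ, (∀ k ∈ T, k ≤ m) →
    ∑ k ∈ T, goldenPhi ^ k < goldenPhi ^ (m + 1) := by
  induction T using Finset.induction_on_max with
  | empty => intro _ m _; simpa using zpow_pos phi_pos _
  | insert a s hs ih =>
    intro hT m hm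
    have ha : a ∉ s := fun h => lt_irrefl _ (hs a h)
    rw [Finset.sum_insert ha]
    have h1 := ih (fun k hk hk' => hT k (Finset.mem_insert_of_mem hk)
      (Finset.mem_insert_of_mem hk')) (a - 2) (fun k hk => by
        have h2 := hs k hk
        have h3 : k + 1 ≠ a := fun h => hT k (Finset.mem_insert_of_mem hk) (by simp [h])
        omega)
    have h4 : goldenPhi ^ (a + 1) ≤ goldenPhi ^ (m + 1) :=
      zpow_le_zpow_right₀ one_lt_phi.le (by linarith [hm a (Finset.mem_insert_self _ _)])
    have h5 := phi_zpow_add a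
    rw [show a - 2 + 1 = a - 1 by ring] at h1
    linarith

/-- The conjugate form of `sum_phi_lt`, obtained by reflecting the exponents. -/
lemma abs_sum_phiBar_lt (T : Finset ℤ) (hT : ∀ k ∈ T, k + 1 ∉ T) (m : ℤ) (hm : ∀ k ∈ T, m ≤ k) :
    |∑ k ∈ T, goldenPhiBar ^ k| < goldenPhi ^ (1 - m) := by
  have h := sum_phi_lt (T.image (fun k => -k)) (by
    intro k hk hk'
    simp only [Finset.mem_image] at hk hk'
    obtain ⟨x, hx, rfl⟩ := hk
    obtain ⟨y, hy, hxy⟩ := hk'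
    exact hT y hy (by rwa [show y + 1 = x by omega])) (-m) (by
    intro k hk
    simp only [Finset.mem_image] at hk
    obtain ⟨x, hx, rfl⟩ := hk
    linarith [hm x hx])
  rw [Finset.sum_image (fun x _ y _ hxy => neg_injective hxy), show -m + 1 = 1 - m by ring] at h
  refine (Finset.abs_sum_le_sum_abs _ _).trans_lt ?_
  simpa only [abs_phiBar_zpow] using h

/-- Powers of `φ` lie in `ℤ[φ]`, and conjugation acts on coordinates as expected. -/
lemma zpow_coords (k : ℤ) : ∃ a b : ℤ, goldenPhi ^ k = a + b * goldenPhi ∧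
    goldenPhiBar ^ k = a + b * goldenPhiBar := by
  have h0 := phi_pos.ne'
  have hs := phi_sq
  have hadd := phi_add_phiBar
  have hb0 : goldenPhiBar ≠ 0 := Real.goldenConj_ne_zero
  have hbs : goldenPhiBar ^ 2 = goldenPhiBar + 1 := Real.goldenConj_sq
  induction k using Int.induction_on with
  | zero => exact ⟨1, 0, by simp, by simp⟩
  | succ n ih =>
    obtain ⟨a, b, h1, h2⟩ := ih
    refine ⟨b, a + b, ?_, ?_⟩
    · rw [zpow_add_one₀ h0, h1]; push_cast; linear_combination b * hs
    · rw [zpow_add_one₀ hb0, h2]; push_cast; linear_combination b * hbs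
  | pred n ih =>
    obtain ⟨a, b, h1, h2⟩ := ih
    refine ⟨b - a, a, ?_, ?_⟩
    · rw [zpow_sub_one₀ h0, h1, ← div_eq_mul_inv, div_eq_iff h0]
      push_cast; linear_combination -a * hs
    · rw [zpow_sub_one₀ hb0, h2, ← div_eq_mul_inv, div_eq_iff hb0]
      push_cast; linear_combination -a * hbs

lemma sum_coords (T : Finset ℤ) : ∃ a b : ℤ, ∑ k ∈ T, goldenPhi ^ k = a + b * goldenPhi ∧
    ∑ k ∈ T, goldenPhiBar ^ k = a + b * goldenPhiBar := by
  choose a b h1 h2 using zpow_coords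
  refine ⟨∑ k ∈ T, a k, ∑ k ∈ T, b k, ?_, ?_⟩
  · push_cast; rw [Finset.sum_mul, ← Finset.sum_add_distrib]
    exact Finset.sum_congr rfl fun k _ => h1 k
  · push_cast; rw [Finset.sum_mul, ← Finset.sum_add_distrib]
    exact Finset.sum_congr rfl fun k _ => h2 k

lemma exists_int_sub (T U : Finset ℤ) (N : ℤ)
    (h : ∑ k ∈ T, goldenPhi ^ k + ∑ k ∈ U, goldenPhi ^ k = N) :
    ∃ M : ℤ, ∑ k ∈ T, goldenPhi ^ k - ∑ k ∈ U, goldenPhiBar ^ k = M := by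
  obtain ⟨a, b, h1, -⟩ := sum_coords T
  obtain ⟨c, d, h3, h4⟩ := sum_coords U
  have hbd : b + d = 0 := by
    by_contra hne
    have hirr : Irrational (((b + d : ℤ) : ℝ) * goldenPhi) :=
      Real.goldenRatio_irrational.intCast_mul hne
    refine hirr.ne_int (N - a - c) ?_
    push_cast
    linarith
  have hd : (d : ℝ) = -b := by
    have : d = -b := by omega
    exact_mod_cast this
  refine ⟨a - c + b, ?_⟩
  rw [h1, h4, hd]
  push_cast
  linear_combination (b : ℝ) * phi_add_phiBar

/-- If `i` is the least element of `T`, the term `φ̄^i` dominates the sum over `T`. -/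
lemma abs_sum_sub_leading_lt (T : Finset ℤ) (hT : ∀ k ∈ T, k + 1 ∉ T) (i : ℤ) (hi : i ∈ T)
    (hmin : ∀ k ∈ T, i ≤ k) :
    |∑ k ∈ T, goldenPhiBar ^ k - goldenPhiBar ^ i| < goldenPhi ^ (-i) := by
  rw [← Finset.add_sum_erase T _ hi, add_sub_cancel_left]
  refine (abs_sum_phiBar_lt (T.erase i) (fun k hk hk' => hT k (Finset.mem_of_mem_erase hk)
    (Finset.mem_of_mem_erase hk')) (i + 1) fun k hk => ?_).trans_eq (by congr 1; ring)
  have h1 := hmin k (Finset.mem_of_mem_erase hk)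
  have h2 := Finset.ne_of_mem_erase hk
  omega

/-- If `S` is a finite set of integers with no two consecutive elements whose
φ-power sum is an integer, and `i` is the smallest positive element of `S`, then
`Σ_{k∈S, k<0} φ^k − Σ_{k∈S, k>0} φ̄^k` equals 1 if `i` is odd and 0 if `i` is even. -/
theorem stmt_12 (S : Finset ℤ)
    (hnc : ∀ k ∈ S, k + 1 ∉ S)
    (hint : ∃ N : ℤ, (∑ k ∈ S, goldenPhi ^ k) = (N : ℝ))
    (i : ℤ) (hiS : i ∈ S) (hipos : 0 < i)
    (hmin : ∀ j ∈ S, 0 < j → i ≤ j) :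
    (∑ k ∈ S.filter (fun k => k < 0), goldenPhi ^ k) -
      (∑ k ∈ S.filter (fun k => 0 < k), goldenPhiBar ^ k) =
      if Odd i then 1 else 0 := by
  obtain ⟨N, hN⟩ := hint
  set T := S.filter (fun k => k < 0) with hTdef
  set U := S.filter (fun k => 0 < k) with hUdef
  have hT : ∀ k ∈ T, k + 1 ∉ T := fun k hk hk' =>
    hnc k (Finset.mem_of_mem_filter k hk) (Finset.mem_of_mem_filter _ hk')
  have hU : ∀ k ∈ U, k + 1 ∉ U := fun k hk hk' =>
    hnc k (Finset.mem_of_mem_filter k hk) (Finset.mem_of_mem_filter _ hk')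
  have hUmin : ∀ k ∈ U, i ≤ k := fun k hk =>
    hmin k (Finset.mem_filter.1 hk).1 (Finset.mem_filter.1 hk).2
  have hiU : i ∈ U := Finset.mem_filter.2 ⟨hiS, hipos⟩
  -- A possible exponent `0` contributes the integer `1` to the sum over `S`.
  have hsplit : ∃ N' : ℤ, ∑ k ∈ T, goldenPhi ^ k + ∑ k ∈ U, goldenPhi ^ k = N' := by
    refine ⟨N - if (0 : ℤ) ∈ S then 1 else 0, ?_⟩
    have h0 : ∑ k ∈ S, (if k = 0 then (1 : ℝ) else 0) = if (0 : ℤ) ∈ S then 1 else 0 := by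
      rw [Finset.sum_ite_eq']
    push_cast
    rw [← hN, ← h0, hTdef, hUdef, Finset.sum_filter, Finset.sum_filter, ← Finset.sum_add_distrib,
      ← Finset.sum_sub_distrib]
    refine Finset.sum_congr rfl fun k _ => ?_
    rcases lt_trichotomy k 0 with h | h | h
    · simp [h, h.ne, h.not_gt]
    · simp [h]
    · simp [h, h.ne', h.not_gt]
  obtain ⟨N', hN'⟩ := hsplit
  obtain ⟨M, hM⟩ := exists_int_sub T U N' hN'
  have hA0 : 0 ≤ ∑ k ∈ T, goldenPhi ^ k :=
    Finset.sum_nonneg fun k _ => (zpow_pos phi_pos k).le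
  have hA1 : ∑ k ∈ T, goldenPhi ^ k < 1 := by
    have h := sum_phi_lt T hT (-1) (fun k hk => by
      have := (Finset.mem_filter.1 hk).2
      omega)
    simpa using h
  have hB1 : |∑ k ∈ U, goldenPhiBar ^ k| < 1 :=
    (abs_sum_phiBar_lt U hU i hUmin).trans_le
      (zpow_le_one_of_nonpos₀ one_lt_phi.le (by omega))
  have hlead := abs_sum_sub_leading_lt U hU i hiU hUmin
  rw [phiBar_zpow i] at hlead
  rw [abs_lt] at hB1 hlead
  rw [hM]
  split_ifs with hodd
  · rw [hodd.neg_one_zpow] at hlead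
    have h1 : (0 : ℝ) < M := by rw [← hM]; linarith
    have h2 : (M : ℝ) < 2 := by rw [← hM]; linarith
    have h3 : 0 < M := by exact_mod_cast h1
    have h4 : M < 2 := by exact_mod_cast h2
    have h5 : M = 1 := by omega
    simp [h5]
  · rw [(Int.not_odd_iff_even.1 hodd).neg_one_zpow] at hlead
    have h1 : (-1 : ℝ) < M := by rw [← hM]; linarith
    have h2 : (M : ℝ) < 1 := by rw [← hM]; linarith
    have h3 : -1 < M := by exact_mod_cast h1
    have h4 : M < 1 := by exact_mod_cast h2
    have h5 : M = 0 := by omega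
    simp [h5]
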